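/- Let w ≥ τ in S_n/(S_d × S_{n-d}) (minimal representatives). A set S of reflections (x,y), 1 ≤ x ≤ d < y ≤ n, satisfies (S1) and is maximal with respect to (S1) if and only if S is exactly the set of all lattice points with y-coordinate > d lying on the paths of some family of non-intersecting north-east lattice paths (P_1,…,P_d) with P_ℓ from A_ℓ = (d+1−ℓ, d) to E_{σ(ℓ)} = (d−κ_{σ(ℓ)}, κ_{σ(ℓ)}+i_{σ(ℓ)}). -/

import Mathlib

def NEStep (p q : ℤ × ℤ) : Prop := q = (p.1 + 1, p.2) ∨ q = (p.1, p.2 + 1)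

def IsNEPathFrom (P : List (ℤ × ℤ)) (A E : ℤ × ℤ) : Prop :=
  P.head? = some A ∧ P.getLast? = some E ∧ List.Chain' NEStep P

def applySwaps (L : List (ℕ × ℕ)) (x : ℕ) : ℕ :=
  L.foldr (fun s y => if y = s.1 then s.2 else if y = s.2 then s.1 else y) x

def sortedFirstVals (d : ℕ) (f : ℕ → ℕ) : List ℕ :=
  ((Finset.Icc 1 d).image f).sort (· ≤ ·)

def DominatedByW (d : ℕ) (f i : ℕ → ℕ) : Prop :=
  ∀ k, k < d → (sortedFirstVals d f).getD k 0 ≤ i (k + 1)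

/-- Property (S1): every chain of pairwise commuting reflections from `S` keeps
`τ` below `w ↔ i` after multiplication. -/
def S1Prop (d : ℕ) (τ i : ℕ → ℕ) (S : Multiset (ℕ × ℕ)) : Prop :=
  ∀ L : List (ℕ × ℕ), (∀ s ∈ L, s ∈ S) →
    L.Pairwise (fun a b => a.1 < b.1 ∧ b.2 < a.2) →
    DominatedByW d (fun x => τ (applySwaps L x)) i

/-!
Multiplying `τ` by a chain of commuting reflections raises a value from at most `i q` to above
`i q` exactly once for each reflection of the chain that lies in the quadrant north-west of `E q`.
Hence (S1) says that the columns up to that of `E q` have room for `q` end points together with any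
south-east chain in this quadrant.

A set with this chain bound is covered by a path family, built from the outside in. The outermost
path follows the lowest staircase above the points of the set and above the anchors: the anchor of
`E j` is the leftmost point on its antidiagonal at which the chain bound would allow a path with
label `j` to end. The outermost path ends at the first `E j` that is its own anchor. A chain
strictly below the staircase either can be prolonged to the north-west or leaves a row or a column
free, so the chain bound survives the removal of this path and of one column.

Conversely, each path meets a chain at most once, so the points of a path family satisfy the chain
bound. The number of these points depends only on the start and end points; therefore the sets
coming from path families are exactly the maximal ones.
-/

section

open Finset

section NorthEastPaths

theorem NEStep.lt {p q : ℤ × ℤ} (h : NEStep p q) : p < q := by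
  rcases h with rfl | rfl <;> simp [Prod.lt_iff]

theorem NEStep.fst_add_snd {p q : ℤ × ℤ} (h : NEStep p q) : q.1 + q.2 = p.1 + p.2 + 1 := by
  rcases h with rfl | rfl <;> simp only <;> ring

namespace IsNEPathFrom

variable {P Q : List (ℤ × ℤ)} {A B B' E : ℤ × ℤ}

theorem start_mem (h : IsNEPathFrom P A E) : A ∈ P :=
  List.mem_of_mem_head? h.1

theorem end_mem (h : IsNEPathFrom P A E) : E ∈ P :=
  List.mem_of_mem_getLast? h.2.1

theorem pairwise_lt (h : IsNEPathFrom P A E) : P.Pairwise (· < ·) :=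
  (List.IsChain.imp (fun _ _ => NEStep.lt) h.2.2).pairwise

theorem le_or_le (h : IsNEPathFrom P A E) {p r : ℤ × ℤ} (hp : p ∈ P) (hr : r ∈ P) :
    p ≤ r ∨ r ≤ p :=
  List.Pairwise.forall_of_forall_of_flip (R := fun p r => p ≤ r ∨ r ≤ p)
    (fun _ _ => .inl le_rfl) (h.pairwise_lt.imp fun hlt => .inl hlt.le)
    (h.pairwise_lt.imp fun hlt => .inr hlt.le) hp hr

theorem start_le (h : IsNEPathFrom P A E) {p : ℤ × ℤ} (hp : p ∈ P) : A ≤ p := by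
  obtain ⟨T, rfl⟩ := List.head?_eq_some_iff.1 h.1
  rcases List.mem_cons.1 hp with rfl | hT
  · exact le_rfl
  · exact (List.rel_of_pairwise_cons h.pairwise_lt hT).le

theorem le_end (h : IsNEPathFrom P A E) {p : ℤ × ℤ} (hp : p ∈ P) : p ≤ E := by
  obtain ⟨T, rfl⟩ := List.getLast?_eq_some_iff.1 h.2.1
  rcases List.mem_append.1 hp with hT | hE
  · exact ((List.pairwise_append.1 h.pairwise_lt).2.2 p hT E (List.mem_singleton_self E)).le
  · exact (List.mem_singleton.1 hE).le

theorem singleton (A : ℤ × ℤ) : IsNEPathFrom [A] A A :=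
  ⟨rfl, rfl, List.isChain_singleton A⟩

theorem append (hP : IsNEPathFrom P A B) (hQ : IsNEPathFrom Q B' E) (hstep : NEStep B B') :
    IsNEPathFrom (P ++ Q) A E := by
  refine ⟨?_, ?_, List.IsChain.append hP.2.2 hQ.2.2 ?_⟩
  · simp [List.head?_append, hP.1]
  · simp [List.getLast?_append, hQ.2.1]
  · rintro p hp q hq
    obtain rfl : B = p := Option.some_injective _ (hP.2.1.symm.trans hp)
    obtain rfl : B' = q := Option.some_injective _ (hQ.1.symm.trans hq)
    exact hstep

theorem length_eq (h : IsNEPathFrom P A E) :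
    (P.length : ℤ) = (E.1 + E.2) - (A.1 + A.2) + 1 := by
  induction P generalizing A with
  | nil => simp [IsNEPathFrom] at h
  | cons a T ih =>
    obtain ⟨hA, hE, hchain⟩ := h
    obtain rfl : a = A := Option.some_injective _ hA
    cases T with
    | nil =>
      obtain rfl : a = E := Option.some_injective _ hE
      simp
    | cons b T =>
      obtain ⟨hstep, htail⟩ := List.isChain_cons_cons.1 hchain
      have := ih ⟨rfl, by simpa using hE, htail⟩
      have := hstep.fst_add_snd
      rw [List.length_cons]
      push_cast
      linarith

theorem card_toFinset (h : IsNEPathFrom P A E) :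
    (#P.toFinset : ℤ) = (E.1 + E.2) - (A.1 + A.2) + 1 := by
  rw [List.toFinset_card_of_nodup (h.pairwise_lt.imp ne_of_lt), h.length_eq]

end IsNEPathFrom

theorem exists_vertical_path (x : ℤ) {y z : ℤ} (hyz : y ≤ z) :
    ∃ P, IsNEPathFrom P (x, y) (x, z) ∧ ∀ p, p ∈ P ↔ p.1 = x ∧ y ≤ p.2 ∧ p.2 ≤ z := by
  induction z, hyz using Int.leInduction with
  | base =>
    refine ⟨_, .singleton _, fun p => ?_⟩
    rw [List.mem_singleton, Prod.ext_iff]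
    exact and_congr_right fun _ => ⟨fun h => ⟨h.ge, h.le⟩, fun h => le_antisymm h.2 h.1⟩
  | succ z hyz ih =>
    obtain ⟨P, hP, hmem⟩ := ih
    refine ⟨P ++ [(x, z + 1)], hP.append (.singleton _) (.inr rfl), fun p => ?_⟩
    rw [List.mem_append, hmem, List.mem_singleton, Prod.ext_iff]
    dsimp only
    omega

theorem exists_path_under {g : ℤ → ℤ} (hg : Monotone g) {m q : ℤ} (hmq : m + 1 ≤ q) :
    ∃ P, IsNEPathFrom P (m + 1, g m) (q, g q) ∧
      ∀ p, p ∈ P ↔ m < p.1 ∧ p.1 ≤ q ∧ g (p.1 - 1) ≤ p.2 ∧ p.2 ≤ g p.1 := by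
  induction q, hmq using Int.leInduction with
  | base =>
    obtain ⟨P, hP, hmem⟩ := exists_vertical_path (m + 1) (hg (Int.le_add_one le_rfl : m ≤ m + 1))
    refine ⟨P, hP, fun ⟨x, y⟩ => ?_⟩
    rw [hmem]
    constructor
    · rintro ⟨rfl, hy⟩
      simpa using hy
    · rintro ⟨h₁, h₂, hy⟩
      obtain rfl : x = m + 1 := le_antisymm h₂ h₁
      simpa using hy
  | succ q hmq ih =>
    obtain ⟨P, hP, hmemP⟩ := ih
    obtain ⟨Q, hQ, hmemQ⟩ := exists_vertical_path (q + 1) (hg (Int.le_add_one le_rfl : q ≤ q + 1))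
    refine ⟨P ++ Q, hP.append hQ (.inl rfl), fun ⟨x, y⟩ => ?_⟩
    rw [List.mem_append, hmemP, hmemQ]
    dsimp only
    constructor
    · rintro (h | ⟨rfl, hy⟩)
      · exact ⟨h.1, by omega, h.2.2⟩
      · simpa using ⟨by omega, hy⟩
    · rintro ⟨h₁, h₂, hy⟩
      rcases h₂.lt_or_eq with h₂ | rfl
      · exact .inl ⟨h₁, by omega, hy⟩
      · exact .inr ⟨rfl, by simpa using hy⟩

end NorthEastPaths

section Ranks

variable {ι : Type*} [LinearOrder ι] {J : Finset ι} {j k q : ι}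

/-- The position, counted from `1`, of a label `j` in the finite set `J`. -/
def rankIn (J : Finset ι) (j : ι) : ℕ := #{k ∈ J | k ≤ j}

theorem rankIn_lt_rankIn (hk : k ∈ J) (hjk : j < k) : rankIn J j < rankIn J k := by
  refine card_lt_card ((ssubset_iff_of_subset ?_).2 ⟨k, ?_, ?_⟩)
  · exact monotone_filter_right J fun _ _ h => h.trans hjk.le
  · exact mem_filter.2 ⟨hk, le_rfl⟩
  · exact fun h => hjk.not_ge (mem_filter.1 h).2

theorem rankIn_pos (hj : j ∈ J) : 0 < rankIn J j :=
  card_pos.2 ⟨j, mem_filter.2 ⟨hj, le_rfl⟩⟩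

theorem rankIn_max' (hJ : J.Nonempty) : rankIn J (J.max' hJ) = #J :=
  congrArg card (filter_true_of_mem fun k hk => J.le_max' k hk)

theorem rankIn_min' (hJ : J.Nonempty) : rankIn J (J.min' hJ) = 1 := by
  refine card_eq_one.2 ⟨J.min' hJ, ext fun k => ?_⟩
  rw [mem_filter, mem_singleton]
  refine ⟨fun h => h.2.antisymm (J.min'_le k h.1), ?_⟩
  rintro rfl
  exact ⟨J.min'_mem hJ, le_rfl⟩

theorem rankIn_erase_of_lt (hkq : k < q) : rankIn (J.erase q) k = rankIn J k := by
  rw [rankIn, filter_erase, erase_eq_of_notMem, rankIn]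
  exact fun h => hkq.not_ge (mem_filter.1 h).2

theorem rankIn_erase_add_one (hq : q ∈ J) (hqk : q ≤ k) :
    rankIn (J.erase q) k + 1 = rankIn J k := by
  rw [rankIn, filter_erase, card_erase_add_one (mem_filter.2 ⟨hq, hqk⟩), rankIn]

theorem rankIn_le_rankIn_erase_add_one : rankIn J k ≤ rankIn (J.erase q) k + 1 := by
  rw [rankIn, rankIn, filter_erase]
  exact Nat.sub_le_iff_le_add.1 pred_card_le_card_erase

theorem rankIn_Icc_one {d q : ℕ} (hq : q ≤ d) : rankIn (Icc 1 d) q = q := by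
  have : {k ∈ Icc 1 d | k ≤ q} = Icc 1 q := by grind
  rw [rankIn, this, Nat.card_Icc, Nat.add_sub_cancel]

end Ranks

section Chains

/-- A list of points running from north-west to south-east. Regarded as transpositions of columns
with rows, these are the chains of commuting reflections of property (S1). -/
def IsSouthEastChain {R : Type*} [LT R] (L : List (R × R)) : Prop :=
  L.Pairwise fun s t => s.1 < t.1 ∧ t.2 < s.2

namespace IsSouthEastChain

theorem sublist {R : Type*} [LT R] {L L' : List (R × R)} (h : IsSouthEastChain L)
    (hsub : L'.Sublist L) : IsSouthEastChain L' :=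
  List.Pairwise.sublist hsub h

theorem nodup_map_fst {R : Type*} [Preorder R] {L : List (R × R)} (h : IsSouthEastChain L) :
    (L.map Prod.fst).Nodup :=
  List.pairwise_map.2 (h.imp fun hst => hst.1.ne)

variable {c : ℤ × ℤ} {L : List (ℤ × ℤ)}

theorem length_cons_le_of_lt_snd {b : ℤ} (h : IsSouthEastChain (c :: L))
    (hb : ∀ s ∈ c :: L, b < s.2) : ((c :: L).length : ℤ) ≤ c.2 - b := by
  induction L generalizing c with
  | nil =>
    have := hb c List.mem_cons_self
    rw [List.length_singleton]
    omega
  | cons e M ih =>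
    have hce := (List.rel_of_pairwise_cons h List.mem_cons_self).2
    have := ih h.of_cons fun s hs => hb s (List.mem_cons_of_mem c hs)
    rw [List.length_cons]
    push_cast
    linarith

theorem length_cons_le_of_fst_le {a : ℤ} (h : IsSouthEastChain (c :: L))
    (ha : ∀ s ∈ c :: L, s.1 ≤ a) : ((c :: L).length : ℤ) ≤ a - c.1 + 1 := by
  induction L generalizing c with
  | nil => simpa using ha c List.mem_cons_self
  | cons e M ih =>
    have hce := (List.rel_of_pairwise_cons h List.mem_cons_self).1
    have := ih h.of_cons fun s hs => ha s (List.mem_cons_of_mem c hs)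
    rw [List.length_cons]
    push_cast
    linarith

end IsSouthEastChain

end Chains

section Staircases

variable {h x y : ℤ} {T : Finset (ℤ × ℤ)}

/-- The staircase generated by `T` above the base line `h`: the height at `x` of the lowest
weakly increasing function with values at least `h` that lies weakly above every point of `T`. -/
def stair (h : ℤ) (T : Finset (ℤ × ℤ)) (x : ℤ) : ℤ :=
  ({t ∈ T | t.1 ≤ x}).fold max h Prod.snd

theorem stair_le : stair h T x ≤ y ↔ h ≤ y ∧ ∀ t ∈ T, t.1 ≤ x → t.2 ≤ y := by
  simp only [stair, fold_max_le, mem_filter, and_imp]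

theorem le_stair : h ≤ stair h T x := (stair_le.1 le_rfl).1

theorem le_stair_of_mem {t : ℤ × ℤ} (ht : t ∈ T) (hx : t.1 ≤ x) : t.2 ≤ stair h T x :=
  (stair_le.1 le_rfl).2 t ht hx

theorem exists_mem_of_lt_stair (hy : h ≤ y) (hlt : y < stair h T x) :
    ∃ t ∈ T, t.1 ≤ x ∧ y < t.2 := by
  by_contra! hT
  exact hlt.not_ge (stair_le.2 ⟨hy, hT⟩)

theorem monotone_stair : Monotone (stair h T) := fun _ _ hxy =>
  stair_le.2 ⟨le_stair, fun _ ht htx => le_stair_of_mem ht (htx.trans hxy)⟩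

end Staircases

section OutermostPath

variable {ι : Type*} [LinearOrder ι]

/-- The bound on south-east chains in `T` equivalent to property (S1): if `m` columns have already
been used up, the `a - m` columns left of the end point `E q = (a, b)` suffice for the labels up to
`q` together with any chain in the quadrant north-west of `E q`. -/
def ChainBound (m : ℤ) (J : Finset ι) (E : ι → ℤ × ℤ) (T : Finset (ℤ × ℤ)) : Prop :=
  ∀ q ∈ J, ∀ L : List (ℤ × ℤ), IsSouthEastChain L →
    (∀ s ∈ L, s ∈ T ∧ s.1 ≤ (E q).1 ∧ (E q).2 < s.2) → m + rankIn J q + L.length ≤ (E q).1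

theorem ChainBound.mono {m : ℤ} {J : Finset ι} {E : ι → ℤ × ℤ} {T T' : Finset (ℤ × ℤ)}
    (hT : ChainBound m J E T) (hsub : T' ⊆ T) : ChainBound m J E T' :=
  fun q hq L hL hmem => hT q hq L hL fun s hs => ⟨hsub (hmem s hs).1, (hmem s hs).2⟩

theorem ChainBound.add_rankIn_le {m : ℤ} {J : Finset ι} {E : ι → ℤ × ℤ} {T : Finset (ℤ × ℤ)}
    (hT : ChainBound m J E T) {q : ι} (hq : q ∈ J) : m + rankIn J q ≤ (E q).1 := by
  simpa using hT q hq [] List.Pairwise.nil (by simp)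

/-- End points `E j`, `j ∈ J`, for a path family starting at the points `(x, h)`, `m < x ≤ d`. -/
structure EndSystem (m d h : ℤ) (J : Finset ι) (E : ι → ℤ × ℤ) : Prop where
  strictMonoOn : StrictMonoOn E J
  fst_le : ∀ j ∈ J, (E j).1 ≤ d
  le_snd : ∀ j ∈ J, h ≤ (E j).2
  add_card : m + #J = d

/-- The leftmost point on the antidiagonal of `E j` at which the chain bound would still allow a
path with label `j` to end. -/
def anchor (m : ℤ) (J : Finset ι) (E : ι → ℤ × ℤ) (j : ι) : ℤ × ℤ :=
  (m + rankIn J j, (E j).1 + (E j).2 - (m + rankIn J j))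

/-- The upper boundary of the region covered by the paths, which the outermost path follows. -/
def outerBoundary (m h : ℤ) (J : Finset ι) (E : ι → ℤ × ℤ) (T : Finset (ℤ × ℤ)) : ℤ → ℤ :=
  stair h (T ∪ J.image (anchor m J E))

/-- The points of `T` left over after removing the path that follows the boundary `g` and ends in
column `a`. -/
def pointsInside (a : ℤ) (g : ℤ → ℤ) (T : Finset (ℤ × ℤ)) : Finset (ℤ × ℤ) :=
  {s ∈ T | s.1 ≤ a → s.2 < g (s.1 - 1)}

/-- The labels `j` whose end point lies in its leftmost possible column. -/
def tightLabels (m : ℤ) (J : Finset ι) (E : ι → ℤ × ℤ) : Finset ι :=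
  {j ∈ J | (E j).1 = m + rankIn J j}

variable {m d h x : ℤ} {J : Finset ι} {E : ι → ℤ × ℤ} {T : Finset (ℤ × ℤ)} {j k q : ι}

theorem mem_tightLabels : q ∈ tightLabels m J E ↔ q ∈ J ∧ (E q).1 = m + rankIn J q :=
  mem_filter

theorem anchor_eq_of_mem_tightLabels (hq : q ∈ tightLabels m J E) : anchor m J E q = E q := by
  rw [anchor, ← (mem_tightLabels.1 hq).2, add_sub_cancel_left]

theorem anchor_snd_le_outerBoundary (hj : j ∈ J) (hx : m + rankIn J j ≤ x) :
    (anchor m J E j).2 ≤ outerBoundary m h J E T x :=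
  le_stair_of_mem (mem_union_right T (mem_image_of_mem _ hj)) hx

theorem snd_le_outerBoundary {t : ℤ × ℤ} (ht : t ∈ T) (hx : t.1 ≤ x) :
    t.2 ≤ outerBoundary m h J E T x :=
  le_stair_of_mem (mem_union_left _ ht) hx

theorem outerBoundary_le {y : ℤ} (hy : h ≤ y) (hT : ∀ t ∈ T, t.1 ≤ x → t.2 ≤ y)
    (hJ : ∀ j ∈ J, m + rankIn J j ≤ x → (anchor m J E j).2 ≤ y) :
    outerBoundary m h J E T x ≤ y := by
  refine stair_le.2 ⟨hy, fun t ht htx => ?_⟩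
  rcases mem_union.1 ht with ht | ht
  · exact hT t ht htx
  · obtain ⟨j, hj, rfl⟩ := mem_image.1 ht
    exact hJ j hj htx

theorem monotone_outerBoundary : Monotone (outerBoundary m h J E T) := monotone_stair

theorem strictMonoOn_fst_add_snd (hE : StrictMonoOn E J) :
    StrictMonoOn (fun j => (E j).1 + (E j).2) J := by
  intro j hj k hk hjk
  rcases Prod.lt_iff.1 (hE hj hk hjk) with ⟨h₁, h₂⟩ | ⟨h₁, h₂⟩
  · exact add_lt_add_of_lt_of_le h₁ h₂
  · exact add_lt_add_of_le_of_lt h₁ h₂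

theorem rankIn_sub_rankIn_le {f : ι → ℤ} (hf : StrictMonoOn f J) (hj : j ∈ J) (hk : k ∈ J)
    (hjk : j ≤ k) : (rankIn J k : ℤ) - rankIn J j ≤ f k - f j := by
  have hsplit : rankIn J k ≤ rankIn J j + #{i ∈ J | j < i ∧ i ≤ k} := by
    refine (card_le_card fun i hi => ?_).trans (card_union_le _ _)
    obtain ⟨hi, hik⟩ := mem_filter.1 hi
    rcases le_or_gt i j with hij | hij
    · exact mem_union_left _ (mem_filter.2 ⟨hi, hij⟩)
    · exact mem_union_right _ (mem_filter.2 ⟨hi, hij, hik⟩)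
  have hinterval : #{i ∈ J | j < i ∧ i ≤ k} ≤ #(Ioc (f j) (f k)) := by
    refine card_le_card_of_injOn f (fun i hi => ?_) (hf.injOn.mono (filter_subset _ J))
    obtain ⟨hi, hji, hik⟩ := mem_filter.1 hi
    exact mem_coe.2 (mem_Ioc.2 ⟨hf hj hi hji, hf.monotoneOn hi hk hik⟩)
  have := hf.monotoneOn hj hk hjk
  rw [Int.card_Ioc] at hinterval
  omega

theorem anchor_snd_le_anchor_snd (hE : StrictMonoOn E J) (hj : j ∈ J) (hk : k ∈ J)
    (hjk : j ≤ k) : (anchor m J E j).2 ≤ (anchor m J E k).2 := by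
  have := rankIn_sub_rankIn_le (strictMonoOn_fst_add_snd hE) hj hk hjk
  simp only [anchor]
  linarith

/-- A finite set of points in the region `m < x ≤ d`, `h < y` that satisfies the chain bound. -/
structure IsAdmissible (m d h : ℤ) (J : Finset ι) (E : ι → ℤ × ℤ) (T : Finset (ℤ × ℤ)) : Prop where
  ends : EndSystem m d h J E
  lt_fst : ∀ t ∈ T, m < t.1
  fst_le : ∀ t ∈ T, t.1 ≤ d
  lt_snd : ∀ t ∈ T, h < t.2
  bound : ChainBound m J E T

theorem EndSystem.erase (hE : EndSystem m d h J E) (hq : q ∈ J) :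
    EndSystem (m + 1) d h (J.erase q) E where
  strictMonoOn := hE.strictMonoOn.mono (coe_subset.2 (erase_subset q J))
  fst_le j hj := hE.fst_le j (mem_of_mem_erase hj)
  le_snd j hj := hE.le_snd j (mem_of_mem_erase hj)
  add_card := by
    have := card_erase_add_one hq
    have := hE.add_card
    omega

namespace IsAdmissible

theorem tightLabels_nonempty (hT : IsAdmissible m d h J E T) (hJ : J.Nonempty) :
    (tightLabels m J E).Nonempty := by
  refine ⟨J.max' hJ, mem_tightLabels.2 ⟨J.max'_mem hJ, le_antisymm ?_ ?_⟩⟩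
  · rw [rankIn_max', hT.ends.add_card]
    exact hT.ends.fst_le _ (J.max'_mem hJ)
  · exact hT.bound.add_rankIn_le (J.max'_mem hJ)

theorem outerBoundary_start (hT : IsAdmissible m d h J E T) : outerBoundary m h J E T m = h := by
  refine le_antisymm (outerBoundary_le le_rfl (fun t ht htm => ?_) fun j hj hjm => ?_) le_stair
  · exact absurd htm (hT.lt_fst t ht).not_ge
  · have := rankIn_pos hj
    omega

theorem outerBoundary_end (hT : IsAdmissible m d h J E T) (hq : q ∈ tightLabels m J E) :
    outerBoundary m h J E T (E q).1 = (E q).2 := by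
  obtain ⟨hqJ, htight⟩ := mem_tightLabels.1 hq
  have hanchor := anchor_eq_of_mem_tightLabels hq
  refine le_antisymm (outerBoundary_le (hT.ends.le_snd q hqJ) (fun t ht htq => ?_)
    fun j hj hjq => ?_) ?_
  · by_contra! hlt
    have := hT.bound q hqJ [t] (List.pairwise_singleton _ t) (by simp [ht, htq, hlt])
    simp [htight] at this
  · have hjq : j ≤ q := by
      by_contra! hlt
      have := rankIn_lt_rankIn hj hlt
      omega
    exact hanchor ▸ anchor_snd_le_anchor_snd hT.ends.strictMonoOn hj hqJ hjq
  · rw [htight, ← hanchor]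
    exact anchor_snd_le_outerBoundary hqJ le_rfl

/-- A chain below the boundary can be extended by a point of `T` to the north-west of it, or else
an anchor to the north-west of it leaves a row or a column unused. -/
theorem add_rankIn_lt_of_chain_below (hT : IsAdmissible m d h J E T) (hk : k ∈ J) {c : ℤ × ℤ}
    {L : List (ℤ × ℤ)} (hchain : IsSouthEastChain (c :: L))
    (hmem : ∀ s ∈ c :: L, s ∈ T ∧ s.1 ≤ (E k).1 ∧ (E k).2 < s.2)
    (hc : c.2 < outerBoundary m h J E T (c.1 - 1)) :
    m + rankIn J k + (c :: L).length < (E k).1 := by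
  obtain ⟨hcT, hcE, hEc⟩ := hmem c List.mem_cons_self
  obtain ⟨t, ht, htc, hct⟩ := exists_mem_of_lt_stair (hT.lt_snd c hcT).le hc
  rcases mem_union.1 ht with ht | ht
  · have hlonger : IsSouthEastChain (t :: c :: L) := by
      refine List.pairwise_cons.2 ⟨fun s hs => ?_, hchain⟩
      rcases List.mem_cons.1 hs with rfl | hs
      · exact ⟨by omega, hct⟩
      · have := List.rel_of_pairwise_cons hchain hs
        omega
    have := hT.bound k hk _ hlonger
      (List.forall_mem_cons.2 ⟨⟨ht, by omega, by omega⟩, hmem⟩)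
    rw [List.length_cons] at this
    omega
  · obtain ⟨j, hj, rfl⟩ := mem_image.1 ht
    rcases le_or_gt j k with hjk | hkj
    · have hrows := hchain.length_cons_le_of_lt_snd fun s hs => (hmem s hs).2.2
      have hanchors := anchor_snd_le_anchor_snd (m := m) hT.ends.strictMonoOn hj hk hjk
      simp only [anchor] at hct hanchors
      omega
    · have hcols := hchain.length_cons_le_of_fst_le fun s hs => (hmem s hs).2.1
      have hranks := rankIn_lt_rankIn hj hkj
      simp only [anchor] at htc
      omega

theorem chainBound_pointsInside (hT : IsAdmissible m d h J E T)
    (hq : IsLeast (tightLabels m J E : Set ι) q) :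
    ChainBound (m + 1) (J.erase q) E (pointsInside (E q).1 (outerBoundary m h J E T) T) := by
  have hqJ := (mem_tightLabels.1 hq.1).1
  intro k hk L hL hmem
  obtain ⟨hkq, hkJ⟩ := mem_erase.1 hk
  have hmemT : ∀ s ∈ L, s ∈ T ∧ s.1 ≤ (E k).1 ∧ (E k).2 < s.2 := fun s hs =>
    ⟨mem_of_mem_filter s (hmem s hs).1, (hmem s hs).2⟩
  rcases lt_or_gt_of_ne hkq with hkq | hqk
  · rw [rankIn_erase_of_lt hkq]
    suffices m + rankIn J k + L.length < (E k).1 by omega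
    cases L with
    | nil =>
      have hnot : (E k).1 ≠ m + rankIn J k := fun h =>
        hkq.not_ge (hq.2 (mem_tightLabels.2 ⟨hkJ, h⟩))
      simpa using (hT.bound.add_rankIn_le hkJ).lt_of_ne' hnot
    | cons c L =>
      obtain ⟨hc, hcE, -⟩ := hmem c List.mem_cons_self
      have hEkq : (E k).1 ≤ (E q).1 := (hT.ends.strictMonoOn hkJ hqJ hkq).le.1
      exact hT.add_rankIn_lt_of_chain_below hkJ hL hmemT
        ((mem_filter.1 hc).2 (hcE.trans hEkq))
  · have := hT.bound k hkJ L hL hmemT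
    have := rankIn_erase_add_one hqJ hqk.le
    omega

theorem isAdmissible_pointsInside (hT : IsAdmissible m d h J E T)
    (hq : IsLeast (tightLabels m J E : Set ι) q) :
    IsAdmissible (m + 1) d h (J.erase q) E
      (pointsInside (E q).1 (outerBoundary m h J E T) T) where
  ends := hT.ends.erase (mem_tightLabels.1 hq.1).1
  fst_le t ht := hT.fst_le t (mem_of_mem_filter t ht)
  lt_snd t ht := hT.lt_snd t (mem_of_mem_filter t ht)
  bound := hT.chainBound_pointsInside hq
  lt_fst t ht := by
    obtain ⟨htT, hinside⟩ := mem_filter.1 ht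
    obtain ⟨hqJ, htight⟩ := mem_tightLabels.1 hq.1
    have := rankIn_pos hqJ
    have := hT.lt_fst t htT
    by_contra! hle
    obtain htm : t.1 = m + 1 := by omega
    have hlow := hinside (by omega)
    rw [htm, add_sub_cancel_right, hT.outerBoundary_start] at hlow
    exact hlow.not_gt (hT.lt_snd t htT)

theorem base_lt_outerBoundary (hT : IsAdmissible m d h J E T) (hJ : J.Nonempty)
    (hmin : J.min' hJ ∉ tightLabels m J E) (hmx : m < x) : h < outerBoundary m h J E T x := by
  have hmem := J.min'_mem hJ
  have hrank := rankIn_min' hJ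
  have hfst := hT.bound.add_rankIn_le hmem
  have hnot : (E (J.min' hJ)).1 ≠ m + rankIn J (J.min' hJ) := fun heq =>
    hmin (mem_tightLabels.2 ⟨hmem, heq⟩)
  have hsnd := hT.ends.le_snd _ hmem
  refine lt_of_lt_of_le ?_ (anchor_snd_le_outerBoundary hmem (by omega))
  simp only [anchor]
  omega

theorem outerBoundary_pointsInside_lt (hT : IsAdmissible m d h J E T)
    (hq : IsLeast (tightLabels m J E : Set ι) q) (hmx : m + 1 < x) (hxq : x ≤ (E q).1) :
    outerBoundary (m + 1) h (J.erase q) E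
        (pointsInside (E q).1 (outerBoundary m h J E T) T) x <
      outerBoundary m h J E T (x - 1) := by
  obtain ⟨hqJ, htight⟩ := mem_tightLabels.1 hq.1
  have hmin : J.min' ⟨q, hqJ⟩ ∉ tightLabels m J E := fun hmem => by
    have heq : J.min' ⟨q, hqJ⟩ = q := (J.min'_le q hqJ).antisymm (hq.2 hmem)
    have hrank := rankIn_min' ⟨q, hqJ⟩
    rw [heq] at hrank
    omega
  have hbase := hT.base_lt_outerBoundary ⟨q, hqJ⟩ hmin (show m < x - 1 by omega)
  refine Int.le_sub_one_iff.1 (outerBoundary_le (by omega) (fun t ht htx => ?_) fun k hk hkx => ?_)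
  · have hlow := (mem_filter.1 ht).2 (htx.trans hxq)
    exact Int.le_sub_one_iff.2
      (hlow.trans_le (monotone_outerBoundary (sub_le_sub_right htx 1)))
  · obtain ⟨hkq, hkJ⟩ := mem_erase.1 hk
    rcases lt_or_gt_of_ne hkq with hkq | hqk
    · rw [rankIn_erase_of_lt hkq] at hkx
      refine le_trans ?_ (sub_le_sub_right (anchor_snd_le_outerBoundary hkJ (by omega)) 1)
      simp only [anchor, rankIn_erase_of_lt hkq]
      omega
    · have := rankIn_erase_add_one hqJ hqk.le
      have := rankIn_lt_rankIn hkJ hqk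
      omega

theorem outerBoundary_pointsInside_le (a : ℤ) (q : ι) (g : ℤ → ℤ) :
    outerBoundary (m + 1) h (J.erase q) E (pointsInside a g T) x ≤
      outerBoundary m h J E T x := by
  refine outerBoundary_le le_stair
    (fun t ht htx => snd_le_outerBoundary (mem_of_mem_filter t ht) htx) fun k hk hkx => ?_
  have hrank : rankIn J k ≤ rankIn (J.erase q) k + 1 := rankIn_le_rankIn_erase_add_one
  refine le_trans ?_ (anchor_snd_le_outerBoundary (mem_of_mem_erase hk) (by omega))
  simp only [anchor]
  omega

end IsAdmissible

end OutermostPath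

section PathFamilies

variable {ι κ : Type*}

/-- Vertex-disjoint north-east paths `P x` from `A x` to `E (σ x)`, for `x ∈ I`, where `σ` matches
the starting labels in `I` with the end labels in `J`. -/
structure IsPathFamily (I : Finset κ) (A : κ → ℤ × ℤ) (J : Finset ι) (E : ι → ℤ × ℤ)
    (P : κ → List (ℤ × ℤ)) (σ : κ → ι) : Prop where
  bijOn : Set.BijOn σ I J
  isPath : ∀ x ∈ I, IsNEPathFrom (P x) (A x) (E (σ x))
  disjoint : (I : Set κ).Pairwise fun x y => (P x).Disjoint (P y)

theorem IsPathFamily.insert_update [DecidableEq ι] [DecidableEq κ] {I : Finset κ} {A : κ → ℤ × ℤ}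
    {J : Finset ι} {E : ι → ℤ × ℤ} {P : κ → List (ℤ × ℤ)} {σ : κ → ι} {a : κ} {q : ι}
    {Q : List (ℤ × ℤ)} (hP : IsPathFamily I A (J.erase q) E P σ) (ha : a ∉ I) (hq : q ∈ J)
    (hQ : IsNEPathFrom Q (A a) (E q)) (hdisj : ∀ x ∈ I, (P x).Disjoint Q) :
    IsPathFamily (insert a I) A J E (Function.update P a Q) (Function.update σ a q) := by
  have hne : ∀ x ∈ I, x ≠ a := fun x hx hxa => ha (hxa ▸ hx)
  refine ⟨?_, ?_, ?_⟩
  · have hσ : Set.BijOn (Function.update σ a q) I (J.erase q) :=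
      hP.bijOn.congr fun x hx => (Function.update_of_ne (hne x hx) q σ).symm
    have := hσ.insert (a := a) (by simp)
    rwa [Function.update_self, ← coe_insert, ← coe_insert, insert_erase hq] at this
  · refine (forall_mem_insert _ _ _).2 ⟨by simpa using hQ, fun x hx => ?_⟩
    rw [Function.update_of_ne (hne x hx), Function.update_of_ne (hne x hx)]
    exact hP.isPath x hx
  · rw [coe_insert]
    refine Set.pairwise_insert.2 ⟨fun x hx y hy hxy => ?_, fun y hy _ => ?_⟩
    · beta_reduce
      rw [Function.update_of_ne (hne x hx), Function.update_of_ne (hne y hy)]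
      exact hP.disjoint hx hy hxy
    · rw [Function.update_self, Function.update_of_ne (hne y hy)]
      exact ⟨(hdisj y hy).symm, hdisj y hy⟩

variable {m d h : ℤ} {J : Finset ι} {E : ι → ℤ × ℤ} {T : Finset (ℤ × ℤ)}

/-- The lattice points strictly above height `h` on the paths `P x`, `x ∈ I`. -/
def pointsAbove {κ : Type*} (h : ℤ) (I : Finset κ) (P : κ → List (ℤ × ℤ)) : Finset (ℤ × ℤ) :=
  {p ∈ I.biUnion fun x => (P x).toFinset | h < p.2}

theorem mem_pointsAbove {I : Finset κ} {P : κ → List (ℤ × ℤ)} {p : ℤ × ℤ} :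
    p ∈ pointsAbove h I P ↔ h < p.2 ∧ ∃ x ∈ I, p ∈ P x := by
  simp only [pointsAbove, mem_filter, mem_biUnion, List.mem_toFinset, and_comm]

theorem pointsAbove_comp {κ' : Type*} {I : Finset κ} {I' : Finset κ'} {P : κ → List (ℤ × ℤ)}
    {c : κ' → κ} (hc : Set.BijOn c I' I) : pointsAbove h I' (P ∘ c) = pointsAbove h I P := by
  ext p
  rw [mem_pointsAbove, mem_pointsAbove]
  refine and_congr_right fun _ => ⟨fun ⟨y, hy, hp⟩ => ⟨c y, hc.mapsTo hy, hp⟩, ?_⟩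
  rintro ⟨x, hx, hp⟩
  obtain ⟨y, hy, rfl⟩ := hc.surjOn hx
  exact ⟨y, hy, hp⟩

namespace IsPathFamily

theorem comp {κ' : Type*} {I : Finset κ} {I' : Finset κ'} {A : κ → ℤ × ℤ} {A' : κ' → ℤ × ℤ}
    {P : κ → List (ℤ × ℤ)} {σ : κ → ι} (hP : IsPathFamily I A J E P σ) {c : κ' → κ}
    (hc : Set.BijOn c I' I) (hA : ∀ y ∈ I', A (c y) = A' y) :
    IsPathFamily I' A' J E (P ∘ c) (σ ∘ c) where
  bijOn := hP.bijOn.comp hc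
  isPath y hy := hA y hy ▸ hP.isPath (c y) (hc.mapsTo hy)
  disjoint _ hx _ hy hxy := hP.disjoint (hc.mapsTo hx) (hc.mapsTo hy) (hc.injOn.ne hx hy hxy)

variable {P : ℤ → List (ℤ × ℤ)} {σ : ℤ → ι}

theorem bounds_of_mem (hP : IsPathFamily (Ioc m d) (fun x => (x, h)) J E P σ) {x : ℤ}
    (hx : x ∈ Ioc m d) {p : ℤ × ℤ} (hp : p ∈ P x) : x ≤ p.1 ∧ h ≤ p.2 ∧ p ≤ E (σ x) :=
  have hxp := (hP.isPath x hx).start_le hp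
  ⟨hxp.1, hxp.2, (hP.isPath x hx).le_end hp⟩

theorem card_pointsAbove (hP : IsPathFamily (Ioc m d) (fun x => (x, h)) J E P σ)
    (hE : ∀ j ∈ J, (E j).1 ≤ d) :
    (#(pointsAbove h (Ioc m d) P) : ℤ) =
      ∑ j ∈ J, ((E j).1 + (E j).2) - ∑ x ∈ Ioc m d, (x + h) := by
  have hbase : {p ∈ (Ioc m d).biUnion fun x => (P x).toFinset | ¬ h < p.2} = Ioc m d ×ˢ {h} := by
    ext ⟨x, y⟩
    simp only [mem_filter, mem_biUnion, List.mem_toFinset, mem_product, mem_singleton, not_lt]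
    constructor
    · rintro ⟨⟨z, hz, hp⟩, hy⟩
      obtain ⟨hzx, hhy, hpE⟩ := hP.bounds_of_mem hz hp
      exact ⟨mem_Ioc.2 ⟨(mem_Ioc.1 hz).1.trans_le hzx, hpE.1.trans (hE _ (hP.bijOn.mapsTo hz))⟩,
        le_antisymm hy hhy⟩
    · rintro ⟨hx, rfl⟩
      exact ⟨⟨x, hx, (hP.isPath x hx).start_mem⟩, le_rfl⟩
  have hall : (#((Ioc m d).biUnion fun x => (P x).toFinset) : ℤ) =
      ∑ x ∈ Ioc m d, (((E (σ x)).1 + (E (σ x)).2) - (x + h) + 1) := by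
    rw [card_biUnion fun x hx y hy hxy =>
      List.disjoint_toFinset_iff_disjoint.2 (hP.disjoint hx hy hxy), Nat.cast_sum]
    exact sum_congr rfl fun x hx => (hP.isPath x hx).card_toFinset
  have hends : ∑ x ∈ Ioc m d, ((E (σ x)).1 + (E (σ x)).2) = ∑ j ∈ J, ((E j).1 + (E j).2) :=
    sum_nbij σ hP.bijOn.mapsTo hP.bijOn.injOn hP.bijOn.surjOn fun _ _ => rfl
  rw [← card_filter_add_card_filter_not (fun p : ℤ × ℤ => h < p.2), hbase, card_product,
    card_singleton, mul_one, sum_add_distrib, sum_sub_distrib, hends, sum_const, nsmul_one] at hall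
  push_cast at hall
  exact add_right_cancel hall

theorem pointsAbove_subset (hP : IsPathFamily (Ioc m d) (fun x => (x, h)) J E P σ) {n : ℤ}
    (hd : ∀ j ∈ J, (E j).1 ≤ d) (hn : ∀ j ∈ J, (E j).2 ≤ n) :
    pointsAbove h (Ioc m d) P ⊆ Ioc m d ×ˢ Ioc h n := by
  intro p hp
  obtain ⟨hhp, x, hx, hpx⟩ := mem_pointsAbove.1 hp
  obtain ⟨hxp, -, hpE⟩ := hP.bounds_of_mem hx hpx
  have hσx := hP.bijOn.mapsTo hx
  exact mem_product.2 ⟨mem_Ioc.2 ⟨(mem_Ioc.1 hx).1.trans_le hxp, hpE.1.trans (hd _ hσx)⟩,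
    mem_Ioc.2 ⟨hhp, hpE.2.trans (hn _ hσx)⟩⟩

end IsPathFamily

theorem exists_isPathFamily_congr {κ' : Type*} [Nonempty κ'] {I : Finset κ} {I' : Finset κ'}
    {A : κ → ℤ × ℤ} {A' : κ' → ℤ × ℤ} {c : κ' → κ} (hc : Set.BijOn c I' I)
    (hA : ∀ y ∈ I', A (c y) = A' y) :
    (∃ P σ, IsPathFamily I A J E P σ ∧ pointsAbove h I P = T) ↔
      ∃ P σ, IsPathFamily I' A' J E P σ ∧ pointsAbove h I' P = T := by
  constructor
  · rintro ⟨P, σ, hP, rfl⟩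
    exact ⟨P ∘ c, σ ∘ c, hP.comp hc hA, pointsAbove_comp hc⟩
  · rintro ⟨P, σ, hP, rfl⟩
    have hinv := hc.invOn_invFunOn
    have hc' := hc.symm hinv.symm
    exact ⟨P ∘ _, σ ∘ _, hP.comp hc' fun x hx => by
      rw [← hA _ (hc'.mapsTo hx), hinv.2 hx], pointsAbove_comp hc'⟩

variable [LinearOrder ι]

/-- A path family from the points `(x, h)`, `m < x ≤ d`, to the end points `E j`, `j ∈ J`, that
passes through every point of `T` and stays weakly below the boundary determined by `T`. -/
structure IsCoveringFamily (m d h : ℤ) (J : Finset ι) (E : ι → ℤ × ℤ) (T : Finset (ℤ × ℤ))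
    (P : ℤ → List (ℤ × ℤ)) (σ : ℤ → ι) : Prop
    extends IsPathFamily (Ioc m d) (fun x => (x, h)) J E P σ where
  exists_mem : ∀ t ∈ T, ∃ x ∈ Ioc m d, t ∈ P x
  le_outerBoundary : ∀ x ∈ Ioc m d, ∀ p ∈ P x, p.2 ≤ outerBoundary m h J E T p.1

namespace IsAdmissible

theorem exists_outermost_path (hT : IsAdmissible m d h J E T) {q : ι}
    (hq : q ∈ tightLabels m J E) :
    ∃ Q, IsNEPathFrom Q (m + 1, h) (E q) ∧
      ∀ p, p ∈ Q ↔ m < p.1 ∧ p.1 ≤ (E q).1 ∧ outerBoundary m h J E T (p.1 - 1) ≤ p.2 ∧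
        p.2 ≤ outerBoundary m h J E T p.1 := by
  obtain ⟨hqJ, htight⟩ := mem_tightLabels.1 hq
  have hrank := rankIn_pos hqJ
  have := exists_path_under (g := outerBoundary m h J E T) monotone_outerBoundary
    (show m + 1 ≤ (E q).1 by omega)
  rwa [hT.outerBoundary_start, hT.outerBoundary_end hq] at this

theorem exists_isCoveringFamily_of_pointsInside (hT : IsAdmissible m d h J E T) {q : ι}
    (hq : IsLeast (tightLabels m J E : Set ι) q) {P : ℤ → List (ℤ × ℤ)} {σ : ℤ → ι}
    (hP : IsCoveringFamily (m + 1) d h (J.erase q) E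
      (pointsInside (E q).1 (outerBoundary m h J E T) T) P σ) :
    ∃ P σ, IsCoveringFamily m d h J E T P σ := by
  have hqJ := (mem_tightLabels.1 hq.1).1
  obtain ⟨Q, hQ, hmemQ⟩ := hT.exists_outermost_path hq.1
  have hIoc : insert (m + 1) (Ioc (m + 1) d) = Ioc m d := by
    have := hT.ends.add_card
    have := card_pos.2 ⟨q, hqJ⟩
    ext x
    simp only [mem_insert, mem_Ioc]
    omega
  have hdisj : ∀ x ∈ Ioc (m + 1) d, (P x).Disjoint Q := fun x hx p hp hpQ => by
    obtain ⟨-, hpq, hlow, -⟩ := (hmemQ p).1 hpQ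
    have hxp := ((hP.isPath x hx).start_le hp).1
    exact (hP.le_outerBoundary x hx p hp).not_gt ((hT.outerBoundary_pointsInside_lt hq
      ((mem_Ioc.1 hx).1.trans_le hxp) hpq).trans_le hlow)
  have hinner : ∀ x ∈ Ioc (m + 1) d, Function.update P (m + 1) Q x = P x := fun x hx =>
    Function.update_of_ne (mem_Ioc.1 hx).1.ne' Q P
  refine ⟨_, _, hIoc ▸ hP.insert_update (by simp) hqJ hQ hdisj, ?_, ?_⟩ <;> rw [← hIoc]
  · intro t ht
    by_cases hin : t ∈ pointsInside (E q).1 (outerBoundary m h J E T) T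
    · obtain ⟨x, hx, htx⟩ := hP.exists_mem t hin
      exact ⟨x, mem_insert_of_mem hx, by rwa [hinner x hx]⟩
    · obtain ⟨htq, hlow⟩ : t.1 ≤ (E q).1 ∧ outerBoundary m h J E T (t.1 - 1) ≤ t.2 := by
        simpa [pointsInside, ht] using hin
      refine ⟨m + 1, mem_insert_self _ _, ?_⟩
      rw [Function.update_self, hmemQ]
      exact ⟨hT.lt_fst t ht, htq, hlow, snd_le_outerBoundary ht le_rfl⟩
  · refine (forall_mem_insert _ _ _).2 ⟨fun p hp => ?_, fun x hx p hp => ?_⟩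
    · rw [Function.update_self, hmemQ] at hp
      exact hp.2.2.2
    · rw [hinner x hx] at hp
      exact (hP.le_outerBoundary x hx p hp).trans (outerBoundary_pointsInside_le _ q _)

theorem exists_isCoveringFamily [Nonempty ι] (hT : IsAdmissible m d h J E T) :
    ∃ P σ, IsCoveringFamily m d h J E T P σ := by
  induction hJ : #J generalizing m J T with
  | zero =>
    obtain rfl := card_eq_zero.1 hJ
    obtain rfl : m = d := by simpa using hT.ends.add_card
    refine ⟨fun _ => [], fun _ => Classical.arbitrary ι, ⟨?_, ?_, ?_⟩, fun t ht => ?_, ?_⟩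
    · simp
    · simp
    · simp
    · exact absurd (hT.lt_fst t ht) (hT.fst_le t ht).not_gt
    · simp
  | succ r ih =>
    have htight := hT.tightLabels_nonempty (card_pos.1 (by omega))
    have hq := isLeast_min' _ htight
    have hqJ := (mem_tightLabels.1 hq.1).1
    obtain ⟨P, σ, hP⟩ := ih (hT.isAdmissible_pointsInside hq)
      (by rw [card_erase_of_mem hqJ, hJ, Nat.add_sub_cancel])
    exact hT.exists_isCoveringFamily_of_pointsInside hq hP

end IsAdmissible

theorem IsPathFamily.card_filter_le_eq_rankIn {I : Finset κ} {A : κ → ℤ × ℤ} {P : κ → List (ℤ × ℤ)}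
    {σ : κ → ι} (hP : IsPathFamily I A J E P σ) (q : ι) : #{x ∈ I | σ x ≤ q} = rankIn J q := by
  refine card_bij (fun x _ => σ x) ?_ ?_ ?_
  · exact fun x hx => mem_filter.2 ((mem_filter.1 hx).imp_left (hP.bijOn.mapsTo ·))
  · exact fun x hx y hy => hP.bijOn.injOn (mem_of_mem_filter x hx) (mem_of_mem_filter y hy)
  · intro j hj
    obtain ⟨hj, hjq⟩ := mem_filter.1 hj
    obtain ⟨x, hx, rfl⟩ := hP.bijOn.surjOn hj
    exact ⟨x, mem_filter.2 ⟨hx, hjq⟩, rfl⟩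

/-- Paths are chains for the product order, so a south-east chain meets each path at most once;
and a path that meets the quadrant north-west of `E q` ends at a label beyond `q`. -/
theorem IsPathFamily.chainBound_pointsAbove {P : ℤ → List (ℤ × ℤ)} {σ : ℤ → ι}
    (hP : IsPathFamily (Ioc m d) (fun x => (x, h)) J E P σ)
    (hE : MonotoneOn E J) : ChainBound m J E (pointsAbove h (Ioc m d) P) := by
  intro q hq L hL hmem
  have hpath : ∀ s ∈ L, ∃ x ∈ Ioc m d, s ∈ P x := fun s hs => (mem_pointsAbove.1 (hmem s hs).1).2
  choose! c hc hcP using hpath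
  have hnodup : (L.map c).Nodup := by
    refine List.pairwise_map.2 (List.Pairwise.imp_of_mem (fun {s t} hs ht hst heq => ?_) hL)
    rcases (hP.isPath _ (hc s hs)).le_or_le (hcP s hs) (heq ▸ hcP t ht) with hle | hle
    · exact hle.2.not_gt hst.2
    · exact hle.1.not_gt hst.1
  have hdisj : Disjoint {x ∈ Ioc m d | σ x ≤ q} (L.map c).toFinset := by
    refine disjoint_left.2 fun x hx hxL => ?_
    obtain ⟨s, hs, rfl⟩ := List.mem_map.1 (List.mem_toFinset.1 hxL)
    have hEs := (hP.bounds_of_mem (hc s hs) (hcP s hs)).2.2.2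
    have := (hE (hP.bijOn.mapsTo (hc s hs)) hq (mem_filter.1 hx).2).2
    exact (hEs.trans this).not_gt (hmem s hs).2.2
  have hsub : {x ∈ Ioc m d | σ x ≤ q} ∪ (L.map c).toFinset ⊆ Ioc m (E q).1 := by
    refine union_subset (fun x hx => ?_) fun x hx => ?_
    · obtain ⟨hx, hxq⟩ := mem_filter.1 hx
      have hxE := (hP.bounds_of_mem hx (hP.isPath x hx).end_mem).1
      exact mem_Ioc.2 ⟨(mem_Ioc.1 hx).1, hxE.trans (hE (hP.bijOn.mapsTo hx) hq hxq).1⟩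
    · obtain ⟨s, hs, rfl⟩ := List.mem_map.1 (List.mem_toFinset.1 hx)
      have hxs := (hP.bounds_of_mem (hc s hs) (hcP s hs)).1
      exact mem_Ioc.2 ⟨(mem_Ioc.1 (hc s hs)).1, hxs.trans (hmem s hs).2.1⟩
  have hcard := card_le_card hsub
  rw [card_union_of_disjoint hdisj, hP.card_filter_le_eq_rankIn,
    List.toFinset_card_of_nodup hnodup, List.length_map, Int.card_Ioc] at hcard
  have := rankIn_pos hq
  omega

theorem EndSystem.exists_isPathFamily_of_chainBound [Nonempty ι] (hE : EndSystem m d h J E) {n : ℤ}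
    (hbox : T ⊆ Ioc m d ×ˢ Ioc h n) (hT : ChainBound m J E T) :
    ∃ P σ, IsPathFamily (Ioc m d) (fun x => (x, h)) J E P σ ∧ T ⊆ pointsAbove h (Ioc m d) P := by
  have hmem : ∀ t ∈ T, (m < t.1 ∧ t.1 ≤ d) ∧ h < t.2 := fun t ht => by
    have := mem_product.1 (hbox ht)
    exact ⟨mem_Ioc.1 this.1, (mem_Ioc.1 this.2).1⟩
  obtain ⟨P, σ, hP⟩ := IsAdmissible.exists_isCoveringFamily
    ⟨hE, fun t ht => (hmem t ht).1.1, fun t ht => (hmem t ht).1.2, fun t ht => (hmem t ht).2, hT⟩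
  exact ⟨P, σ, hP.toIsPathFamily, fun t ht =>
    mem_pointsAbove.2 ⟨(hmem t ht).2, hP.exists_mem t ht⟩⟩

theorem EndSystem.maximal_chainBound_iff [Nonempty ι] (hE : EndSystem m d h J E) {n : ℤ}
    (hn : ∀ j ∈ J, (E j).2 ≤ n) :
    Maximal (fun T => T ⊆ Ioc m d ×ˢ Ioc h n ∧ ChainBound m J E T) T ↔
      ∃ P σ, IsPathFamily (Ioc m d) (fun x => (x, h)) J E P σ ∧ pointsAbove h (Ioc m d) P = T := by
  constructor
  · rintro hT
    obtain ⟨P, σ, hP, hTP⟩ := hE.exists_isPathFamily_of_chainBound hT.prop.1 hT.prop.2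
    exact ⟨P, σ, hP, (hT.eq_of_le ⟨hP.pointsAbove_subset hE.fst_le hn,
      hP.chainBound_pointsAbove hE.strictMonoOn.monotoneOn⟩ hTP).symm⟩
  · rintro ⟨P, σ, hP, rfl⟩
    refine ⟨⟨hP.pointsAbove_subset hE.fst_le hn,
      hP.chainBound_pointsAbove hE.strictMonoOn.monotoneOn⟩, fun T hT hPT => ?_⟩
    obtain ⟨P', σ', hP', hTP'⟩ := hE.exists_isPathFamily_of_chainBound hT.1 hT.2
    have hcard : #(pointsAbove h (Ioc m d) P') = #(pointsAbove h (Ioc m d) P) := by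
      exact_mod_cast (hP'.card_pointsAbove hE.fst_le).trans (hP.card_pointsAbove hE.fst_le).symm
    exact hTP'.trans (eq_of_subset_of_card_le (hPT.trans hTP') hcard.le).ge

end PathFamilies

section Domination

theorem sort_getD_le_iff {F : Finset ℕ} {k v : ℕ} (hk : k < #F) :
    (F.sort (· ≤ ·)).getD k 0 ≤ v ↔ k < #{x ∈ F | x ≤ v} := by
  have hfin : (Set.ofPred (· ∈ F)).Finite := F.finite_toSet
  have hF : hfin.toFinset = F := by
    ext
    simp [Set.ofPred]
  have hnth : (F.sort (· ≤ ·)).getD k 0 = Nat.nth (· ∈ F) k := by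
    rw [Nat.nth_eq_getD_sort hfin, hF]
  have hcount : #{x ∈ F | x ≤ v} = Nat.count (· ∈ F) (v + 1) := by
    rw [Nat.count_eq_card_filter_range]
    congr 1
    ext x
    simp only [mem_filter, mem_range, Nat.lt_succ_iff, and_comm]
  rw [hnth, hcount]
  refine ⟨fun hle => ?_, fun hlt => Nat.lt_succ_iff.1 (Nat.nth_lt_of_lt_count hlt)⟩
  rw [← Nat.succ_le_iff, Nat.succ_eq_add_one,
    ← Nat.count_nth_succ (p := (· ∈ F)) fun _ => hk.trans_eq (congrArg card hF).symm]
  exact Nat.count_monotone _ (Nat.succ_le_succ hle)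

theorem dominatedByW_iff {d : ℕ} {f i : ℕ → ℕ} (hf : Set.InjOn f (Icc 1 d : Finset ℕ)) :
    DominatedByW d f i ↔ ∀ q ∈ Icc 1 d, q ≤ #{x ∈ Icc 1 d | f x ≤ i q} := by
  have hentry : ∀ k < d, (sortedFirstVals d f).getD k 0 ≤ i (k + 1) ↔
      k + 1 ≤ #{x ∈ Icc 1 d | f x ≤ i (k + 1)} := fun k hk => by
    rw [sortedFirstVals, sort_getD_le_iff (by rwa [card_image_of_injOn hf, Nat.card_Icc]),
      filter_image, card_image_of_injOn (hf.mono (filter_subset _ _)), Nat.succ_le_iff]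
  constructor
  · intro h q hq
    obtain ⟨k, rfl⟩ := Nat.exists_eq_add_of_le' (mem_Icc.1 hq).1
    have hk : k < d := (mem_Icc.1 hq).2
    exact (hentry k hk).1 (h k hk)
  · exact fun h k hk => (hentry k hk).2 (h (k + 1) (mem_Icc.2 ⟨Nat.le_add_left 1 k, hk⟩))

end Domination

section Reflections

variable {d : ℕ} {L : List (ℕ × ℕ)} {s : ℕ × ℕ} {x : ℕ}

theorem applySwaps_cons (s : ℕ × ℕ) (L : List (ℕ × ℕ)) (x : ℕ) :
    applySwaps (s :: L) x = Equiv.swap s.1 s.2 (applySwaps L x) :=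
  (Equiv.swap_apply_def _ _ _).symm

theorem applySwaps_injective (L : List (ℕ × ℕ)) : Function.Injective (applySwaps L) := by
  induction L with
  | nil => exact Function.injective_id
  | cons s L ih =>
    intro x y hxy
    rw [applySwaps_cons, applySwaps_cons] at hxy
    exact ih ((Equiv.swap s.1 s.2).injective hxy)

theorem mapsTo_applySwaps {R : Set ℕ} (hL : ∀ s ∈ L, s.1 ∈ R ∧ s.2 ∈ R) :
    Set.MapsTo (applySwaps L) R R := by
  induction L with
  | nil => exact Set.mapsTo_id R
  | cons s L ih =>
    intro x hx
    obtain ⟨hs, hL⟩ := List.forall_mem_cons.1 hL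
    have := ih hL hx
    rw [applySwaps_cons, Equiv.swap_apply_def]
    split_ifs
    exacts [hs.2, hs.1, this]

theorem applySwaps_of_ne (hx : ∀ s ∈ L, x ≠ s.1 ∧ x ≠ s.2) : applySwaps L x = x := by
  induction L with
  | nil => rfl
  | cons s L ih =>
    obtain ⟨hs, hL⟩ := List.forall_mem_cons.1 hx
    rw [applySwaps_cons, ih hL, Equiv.swap_apply_of_ne_of_ne hs.1 hs.2]

theorem applySwaps_of_notMem (hd : ∀ s ∈ L, d < s.2) (hx : x ≤ d) (hxL : x ∉ L.map Prod.fst) :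
    applySwaps L x = x :=
  applySwaps_of_ne fun s hs =>
    ⟨fun h => hxL (h ▸ List.mem_map_of_mem hs), (hx.trans_lt (hd s hs)).ne⟩

theorem applySwaps_fst (hL : IsSouthEastChain L) (hd : ∀ s ∈ L, s.1 ≤ d ∧ d < s.2) (hs : s ∈ L) :
    applySwaps L s.1 = s.2 := by
  induction L with
  | nil => exact absurd hs List.not_mem_nil
  | cons t L ih =>
    obtain ⟨ht, hdL⟩ := List.forall_mem_cons.1 hd
    rw [applySwaps_cons]
    rcases List.mem_cons.1 hs with rfl | hs
    · rw [applySwaps_of_ne, Equiv.swap_apply_left]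
      exact fun t ht' => ⟨(List.rel_of_pairwise_cons hL ht').1.ne,
        (ht.1.trans_lt (hdL t ht').2).ne⟩
    · rw [ih hL.of_cons hdL hs, Equiv.swap_apply_of_ne_of_ne]
      · exact (ht.1.trans_lt (hdL s hs).2).ne'
      · exact (List.rel_of_pairwise_cons hL hs).2.ne

end Reflections

section Counting

theorem le_iff_lt_add_card_of_monotoneOn {f : ℕ → ℕ} {l u v x : ℕ}
    (hf : MonotoneOn f (Set.Icc l u)) (hx : x ∈ Set.Icc l u) :
    f x ≤ v ↔ x < l + #{y ∈ Icc l u | f y ≤ v} := by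
  constructor
  · intro hfx
    have hsub : Icc l x ⊆ {y ∈ Icc l u | f y ≤ v} := fun y hy => by
      obtain ⟨hly, hyx⟩ := mem_Icc.1 hy
      have hyu := hyx.trans hx.2
      exact mem_filter.2 ⟨mem_Icc.2 ⟨hly, hyu⟩, (hf ⟨hly, hyu⟩ hx hyx).trans hfx⟩
    have := card_le_card hsub
    rw [Nat.card_Icc] at this
    omega
  · contrapose!
    intro hvx
    have hsub : {y ∈ Icc l u | f y ≤ v} ⊆ Ico l x := fun y hy => by
      obtain ⟨hy, hyv⟩ := mem_filter.1 hy
      have hy := mem_Icc.1 hy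
      refine mem_Ico.2 ⟨hy.1, ?_⟩
      by_contra! hxy
      exact (hf hx hy hxy).not_gt (hyv.trans_lt hvx)
    have := card_le_card hsub
    rw [Nat.card_Ico] at this
    have := hx.1
    omega

theorem card_filter_le_of_bijOn {τ : ℕ → ℕ} {n v : ℕ}
    (hτ : Set.BijOn τ (Set.Icc 1 n) (Set.Icc 1 n)) (hv : v ≤ n) :
    #{x ∈ Icc 1 n | τ x ≤ v} = v := by
  rw [← coe_Icc] at hτ
  have himage : ({x ∈ Icc 1 n | τ x ≤ v}).image τ = Icc 1 v := by
    have hsurj : (Icc 1 n).image τ = Icc 1 n := by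
      rw [← coe_inj, coe_image, hτ.image_eq]
    have hfilter := filter_image (s := Icc 1 n) (f := τ) (p := (· ≤ v))
    rw [← hfilter, hsurj]
    grind
  rw [← card_image_of_injOn (hτ.injOn.mono (filter_subset _ _)), himage, Nat.card_Icc,
    Nat.add_sub_cancel]

/-- The point `(a, b)` such that `τ`, increasing on `[1, d]` and on `[d + 1, n]`, takes values at
most `v` precisely on `[1, a]` and `[d + 1, b]`. -/
def cutPoint (n d : ℕ) (τ : ℕ → ℕ) (v : ℕ) : ℕ × ℕ :=
  (#{x ∈ Icc 1 d | τ x ≤ v}, d + #{y ∈ Icc (d + 1) n | τ y ≤ v})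

variable {n d v : ℕ} {τ : ℕ → ℕ}

theorem le_iff_le_cutPoint_fst (hτ : MonotoneOn τ (Set.Icc 1 d)) {x : ℕ} (hx : x ∈ Icc 1 d) :
    τ x ≤ v ↔ x ≤ (cutPoint n d τ v).1 := by
  rw [le_iff_lt_add_card_of_monotoneOn hτ (mem_Icc.1 hx), add_comm, Nat.lt_succ_iff, cutPoint]

theorem le_iff_le_cutPoint_snd (hτ : MonotoneOn τ (Set.Icc (d + 1) n)) {y : ℕ}
    (hy : y ∈ Icc (d + 1) n) : τ y ≤ v ↔ y ≤ (cutPoint n d τ v).2 := by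
  rw [le_iff_lt_add_card_of_monotoneOn hτ (mem_Icc.1 hy), add_right_comm, Nat.lt_succ_iff,
    cutPoint]

theorem monotone_cutPoint : Monotone (cutPoint n d τ) := fun v w hvw => by
  have hcard : ∀ F : Finset ℕ, #{x ∈ F | τ x ≤ v} ≤ #{x ∈ F | τ x ≤ w} := fun F =>
    card_le_card (monotone_filter_right F fun _ _ h => h.trans hvw)
  exact Prod.mk_le_mk.2 ⟨hcard _, Nat.add_le_add_left (hcard _) d⟩

theorem cutPoint_fst_le : (cutPoint n d τ v).1 ≤ d :=
  (card_filter_le _ _).trans_eq (Nat.card_Icc 1 d)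

theorem cutPoint_snd_le (hdn : d ≤ n) : (cutPoint n d τ v).2 ≤ n := by
  have := card_filter_le (Icc (d + 1) n) (τ · ≤ v)
  rw [Nat.card_Icc] at this
  rw [cutPoint]
  omega

theorem cutPoint_fst_add_snd (hτ : Set.BijOn τ (Set.Icc 1 n) (Set.Icc 1 n)) (hdn : d ≤ n)
    (hv : v ≤ n) : (cutPoint n d τ v).1 + (cutPoint n d τ v).2 = d + v := by
  have hunion : {x ∈ Icc 1 d | τ x ≤ v} ∪ {y ∈ Icc (d + 1) n | τ y ≤ v} =
      {x ∈ Icc 1 n | τ x ≤ v} := by grind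
  have hdisj : Disjoint {x ∈ Icc 1 d | τ x ≤ v} {y ∈ Icc (d + 1) n | τ y ≤ v} :=
    disjoint_filter_filter (disjoint_left.2 fun x => by grind)
  rw [cutPoint, add_left_comm, ← card_union_of_disjoint hdisj, hunion,
    card_filter_le_of_bijOn hτ hv]

theorem cutPoint_fst_add_card_lt :
    (cutPoint n d τ v).1 + #{x ∈ Icc 1 d | v < τ x} = d := by
  simpa [cutPoint] using card_filter_add_card_filter_not (s := Icc 1 d) (τ · ≤ v)

variable {L : List (ℕ × ℕ)}

theorem card_filter_applySwaps_add_length_le (hτ₁ : MonotoneOn τ (Set.Icc 1 d))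
    (hτ₂ : MonotoneOn τ (Set.Icc (d + 1) n)) (hL : IsSouthEastChain L)
    (hbox : ∀ s ∈ L, s.1 ∈ Icc 1 d ∧ s.2 ∈ Icc (d + 1) n)
    (hcut : ∀ s ∈ L, s.1 ≤ (cutPoint n d τ v).1 ∧ (cutPoint n d τ v).2 < s.2) :
    #{x ∈ Icc 1 d | τ (applySwaps L x) ≤ v} + L.length ≤ (cutPoint n d τ v).1 := by
  have hd : ∀ s ∈ L, s.1 ≤ d ∧ d < s.2 := fun s hs =>
    (hbox s hs).imp (mem_Icc.1 · |>.2) (mem_Icc.1 · |>.1)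
  have hdisj : Disjoint {x ∈ Icc 1 d | τ (applySwaps L x) ≤ v} (L.map Prod.fst).toFinset := by
    refine disjoint_left.2 fun x hx hxL => ?_
    obtain ⟨s, hs, rfl⟩ := List.mem_map.1 (List.mem_toFinset.1 hxL)
    have hsv := (mem_filter.1 hx).2
    rw [applySwaps_fst hL hd hs, le_iff_le_cutPoint_snd hτ₂ (hbox s hs).2] at hsv
    exact (hcut s hs).2.not_ge hsv
  have hsub : {x ∈ Icc 1 d | τ (applySwaps L x) ≤ v} ∪ (L.map Prod.fst).toFinset ⊆
      Icc 1 (cutPoint n d τ v).1 := by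
    intro x hx
    by_cases hxL : x ∈ L.map Prod.fst
    · obtain ⟨s, hs, rfl⟩ := List.mem_map.1 hxL
      exact mem_Icc.2 ⟨(mem_Icc.1 (hbox s hs).1).1, (hcut s hs).1⟩
    · rw [mem_union, List.mem_toFinset, or_iff_left hxL, mem_filter] at hx
      obtain ⟨hxd, hxv⟩ := hx
      rw [applySwaps_of_notMem (fun s hs => (hd s hs).2) (mem_Icc.1 hxd).2 hxL,
        le_iff_le_cutPoint_fst hτ₁ hxd] at hxv
      exact mem_Icc.2 ⟨(mem_Icc.1 hxd).1, hxv⟩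
  have hcard := card_le_card hsub
  rwa [card_union_of_disjoint hdisj, List.toFinset_card_of_nodup hL.nodup_map_fst,
    List.length_map, Nat.card_Icc, Nat.add_sub_cancel] at hcard

theorem cutPoint_fst_le_card_filter_applySwaps_add (hτ₁ : MonotoneOn τ (Set.Icc 1 d))
    (hτ₂ : MonotoneOn τ (Set.Icc (d + 1) n)) (hL : IsSouthEastChain L)
    (hbox : ∀ s ∈ L, s.1 ∈ Icc 1 d ∧ s.2 ∈ Icc (d + 1) n) :
    (cutPoint n d τ v).1 ≤ #{x ∈ Icc 1 d | τ (applySwaps L x) ≤ v} +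
      (L.filter fun s => s.1 ≤ (cutPoint n d τ v).1 ∧ (cutPoint n d τ v).2 < s.2).length := by
  have hd : ∀ s ∈ L, s.1 ≤ d ∧ d < s.2 := fun s hs =>
    (hbox s hs).imp (mem_Icc.1 · |>.2) (mem_Icc.1 · |>.1)
  set M := L.filter fun s => s.1 ≤ (cutPoint n d τ v).1 ∧ (cutPoint n d τ v).2 < s.2
  have hsub : Icc 1 (cutPoint n d τ v).1 ⊆
      {x ∈ Icc 1 d | τ (applySwaps L x) ≤ v} ∪ (M.map Prod.fst).toFinset := by
    intro x hx
    obtain ⟨hx1, hxa⟩ := mem_Icc.1 hx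
    have hxd : x ∈ Icc 1 d := mem_Icc.2 ⟨hx1, hxa.trans cutPoint_fst_le⟩
    refine mem_union.2 (or_iff_not_imp_left.2 fun hxv => ?_)
    rw [mem_filter, not_and] at hxv
    have hxv := hxv hxd
    by_cases hxL : x ∈ L.map Prod.fst
    · obtain ⟨s, hs, rfl⟩ := List.mem_map.1 hxL
      rw [applySwaps_fst hL hd hs, le_iff_le_cutPoint_snd hτ₂ (hbox s hs).2, not_le] at hxv
      exact List.mem_toFinset.2 (List.mem_map_of_mem
        (List.mem_filter.2 ⟨hs, decide_eq_true ⟨hxa, hxv⟩⟩))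
    · rw [applySwaps_of_notMem (fun s hs => (hd s hs).2) (mem_Icc.1 hxd).2 hxL,
        le_iff_le_cutPoint_fst hτ₁ hxd] at hxv
      exact absurd hxa hxv
  have hcard := (card_le_card hsub).trans (card_union_le _ _)
  rw [Nat.card_Icc, Nat.add_sub_cancel] at hcard
  refine hcard.trans (Nat.add_le_add_left ?_ _)
  exact (List.toFinset_card_le _).trans_eq (List.length_map _)

theorem s1Prop_iff {i : ℕ → ℕ} {S : Finset (ℕ × ℕ)} (hτ : Set.InjOn τ (Set.Icc 1 n))
    (hτ₁ : MonotoneOn τ (Set.Icc 1 d)) (hτ₂ : MonotoneOn τ (Set.Icc (d + 1) n)) (hdn : d ≤ n)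
    (hS : S ⊆ Icc 1 d ×ˢ Icc (d + 1) n) :
    S1Prop d τ i S.val ↔ ∀ q ∈ Icc 1 d, ∀ L, IsSouthEastChain L →
      (∀ s ∈ L, s ∈ S ∧ s.1 ≤ (cutPoint n d τ (i q)).1 ∧ (cutPoint n d τ (i q)).2 < s.2) →
        q + L.length ≤ (cutPoint n d τ (i q)).1 := by
  have hinj : ∀ L : List (ℕ × ℕ), (∀ s ∈ L, s ∈ S) →
      Set.InjOn (fun x => τ (applySwaps L x)) (Icc 1 d : Finset ℕ) := fun L hL => by
    have hmaps : Set.MapsTo (applySwaps L) (Set.Icc 1 n) (Set.Icc 1 n) :=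
      mapsTo_applySwaps fun s hs => by
        have := mem_product.1 (hS (hL s hs))
        simp only [mem_Icc, Set.mem_Icc] at this ⊢
        omega
    rw [coe_Icc]
    exact (hτ.comp (applySwaps_injective L).injOn hmaps).mono (Set.Icc_subset_Icc_right hdn)
  constructor
  · intro h q hq L hL hmem
    have hLS : ∀ s ∈ L, s ∈ S := fun s hs => (hmem s hs).1
    have hle := (dominatedByW_iff (hinj L hLS)).1 (h L hLS hL) q hq
    exact (Nat.add_le_add_right hle _).trans (card_filter_applySwaps_add_length_le hτ₁ hτ₂ hL
      (fun s hs => mem_product.1 (hS (hLS s hs))) fun s hs => (hmem s hs).2)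
  · intro h L hLS hL
    refine (dominatedByW_iff (hinj L hLS)).2 fun q hq => ?_
    have hbound := h q hq _ (IsSouthEastChain.sublist hL List.filter_sublist) fun s hs =>
      (List.mem_filter.1 hs).imp (hLS s) of_decide_eq_true
    exact Nat.add_le_add_iff_right.1 (hbound.trans (cutPoint_fst_le_card_filter_applySwaps_add
      hτ₁ hτ₂ hL fun s hs => mem_product.1 (hS (hLS s hs))))

end Counting

section LatticePoints

/-- The lattice point of the plane with which a reflection is identified. -/
def latticePoint : ℕ × ℕ ↪ ℤ × ℤ := Nat.castEmbedding.prodMap Nat.castEmbedding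

@[simp]
theorem latticePoint_apply (s : ℕ × ℕ) : latticePoint s = ((s.1 : ℤ), (s.2 : ℤ)) := rfl

theorem strictMono_latticePoint : StrictMono latticePoint :=
  Monotone.strictMono_of_injective
    (fun _ _ h => Prod.mk_le_mk.2 (h.imp Nat.cast_le.2 Nat.cast_le.2)) latticePoint.injective

theorem isSouthEastChain_map_latticePoint {L : List (ℕ × ℕ)} :
    IsSouthEastChain (L.map latticePoint) ↔ IsSouthEastChain L := by
  simp only [IsSouthEastChain, List.pairwise_map, latticePoint_apply, Nat.cast_lt]

theorem map_latticePoint_product_Icc (d n : ℕ) :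
    (Icc 1 d ×ˢ Icc (d + 1) n).map latticePoint = Ioc (0 : ℤ) d ×ˢ Ioc (d : ℤ) n := by
  ext ⟨x, y⟩
  simp only [mem_map, mem_product, mem_Icc, mem_Ioc, latticePoint_apply, Prod.exists,
    Prod.mk.injEq]
  constructor
  · rintro ⟨a, b, h, rfl, rfl⟩
    omega
  · exact fun h => ⟨x.toNat, y.toNat, by omega⟩

variable {n d : ℕ} {τ i : ℕ → ℕ} {E : ℕ → ℤ × ℤ} {S : Finset (ℕ × ℕ)}

theorem chainBound_map_latticePoint {p : ℕ → ℕ × ℕ} (hE : ∀ q ∈ Icc 1 d, E q = latticePoint (p q)) :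
    ChainBound 0 (Icc 1 d) E (S.map latticePoint) ↔
      ∀ q ∈ Icc 1 d, ∀ L, IsSouthEastChain L →
        (∀ s ∈ L, s ∈ S ∧ s.1 ≤ (p q).1 ∧ (p q).2 < s.2) → q + L.length ≤ (p q).1 := by
  refine forall₂_congr fun q hq => ?_
  rw [hE q hq, rankIn_Icc_one (mem_Icc.1 hq).2]
  simp only [latticePoint_apply]
  constructor
  · intro h L hL hmem
    have := h (L.map latticePoint) (isSouthEastChain_map_latticePoint.2 hL) fun s hs => by
      obtain ⟨t, ht, rfl⟩ := List.mem_map.1 hs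
      simpa using hmem t ht
    rw [List.length_map] at this
    omega
  · intro h L hL hmem
    obtain ⟨L, rfl⟩ : L ∈ Set.range (List.map latticePoint) := by
      rw [Set.range_list_map]
      exact fun s hs => (mem_map.1 (hmem s hs).1).imp fun _ h => h.2
    have := h L (isSouthEastChain_map_latticePoint.1 hL) fun s hs => by
      simpa using hmem _ (List.mem_map_of_mem hs)
    rw [List.length_map]
    omega

theorem endSystem_of_cutPoint (hτ : Set.BijOn τ (Set.Icc 1 n) (Set.Icc 1 n)) (hdn : d ≤ n)
    (hi : StrictMonoOn i (Set.Icc 1 d)) (hiN : ∀ q ∈ Set.Icc 1 d, i q ≤ n)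
    (hE : ∀ q ∈ Icc 1 d, E q = latticePoint (cutPoint n d τ (i q))) :
    EndSystem 0 d d (Icc 1 d) E where
  strictMonoOn := by
    rw [coe_Icc]
    intro j hj k hk hjk
    have hij := hi hj hk hjk
    have hne : cutPoint n d τ (i j) ≠ cutPoint n d τ (i k) := fun heq => by
      have := cutPoint_fst_add_snd hτ hdn (hiN j hj)
      rw [heq, cutPoint_fst_add_snd hτ hdn (hiN k hk)] at this
      omega
    rw [hE j (mem_Icc.2 hj), hE k (mem_Icc.2 hk)]
    exact strictMono_latticePoint ((monotone_cutPoint hij.le).lt_of_ne hne)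
  fst_le q hq := by
    rw [hE q hq, latticePoint_apply]
    exact Nat.cast_le.2 cutPoint_fst_le
  le_snd q hq := by
    rw [hE q hq, latticePoint_apply]
    exact Nat.cast_le.2 (Nat.le_add_right d _)
  add_card := by rw [Nat.card_Icc, Nat.add_sub_cancel, zero_add]

theorem eq_latticePoint_cutPoint (hτ : Set.BijOn τ (Set.Icc 1 n) (Set.Icc 1 n)) (hdn : d ≤ n)
    {v : ℕ} (hv : v ≤ n) :
    ((d : ℤ) - #{x ∈ Icc 1 d | v < τ x}, (#{x ∈ Icc 1 d | v < τ x} : ℤ) + v) =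
      latticePoint (cutPoint n d τ v) := by
  have hfst := cutPoint_fst_add_card_lt (n := n) (d := d) (v := v) (τ := τ)
  have hsum := cutPoint_fst_add_snd hτ hdn hv
  rw [latticePoint_apply, Prod.mk.injEq]
  omega

theorem maximal_map_latticePoint_iff {R : Finset (ℕ × ℕ)} {p : Finset (ℕ × ℕ) → Prop}
    {p' : Finset (ℤ × ℤ) → Prop} (hp : ∀ S ⊆ R, p S ↔ p' (S.map latticePoint)) :
    Maximal (fun T => T ⊆ R.map latticePoint ∧ p' T) (S.map latticePoint) ↔
      Maximal (fun S => S ⊆ R ∧ p S) S := by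
  have hiff : ∀ S, S.map latticePoint ⊆ R.map latticePoint ∧ p' (S.map latticePoint) ↔
      S ⊆ R ∧ p S := fun S => by
    rw [map_subset_map]
    exact and_congr_right fun hS => (hp S hS).symm
  simp only [Maximal, hiff]
  refine and_congr_right fun _ => ⟨fun h S' hS' hle => ?_, fun h T hT hle => ?_⟩
  · exact map_subset_map.1 (h ((hiff S').2 hS') (map_subset_map.2 hle))
  · obtain ⟨S', -, rfl⟩ := subset_map_iff.1 hT.1
    exact map_subset_map.2 (h ((hiff S').1 hT) (map_subset_map.1 hle))

theorem maximal_s1Prop_iff {R : Finset (ℕ × ℕ)} (hS : S ⊆ R) :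
    Maximal (fun S => S ⊆ R ∧ S1Prop d τ i S.val) S ↔
      S1Prop d τ i S.val ∧ ∀ s ∉ S, s ∈ R → ¬ S1Prop d τ i (insert s S).val := by
  rw [maximal_iff_forall_insert fun T T' hT' hTT' =>
    ⟨hTT'.trans hT'.1, fun L hL => hT'.2 L fun s hs => hTT' (hL s hs)⟩]
  simp only [hS, true_and, insert_subset_iff, and_true, not_and]

theorem pointsAbove_eq_map_latticePoint_iff {κ : Type*} {h : ℤ} {I : Finset κ}
    {P : κ → List (ℤ × ℤ)} :
    pointsAbove h I P = S.map latticePoint ↔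
      ∀ p : ℤ × ℤ, (h < p.2 ∧ ∃ x ∈ I, p ∈ P x) ↔ ∃ s ∈ S, p = ((s.1 : ℤ), (s.2 : ℤ)) := by
  simp only [Finset.ext_iff, mem_pointsAbove, mem_map, latticePoint_apply, eq_comm]

theorem isPathFamily_Icc_iff {A : ℕ → ℤ × ℤ} {P : ℕ → List (ℤ × ℤ)} {σ : ℕ → ℕ} :
    IsPathFamily (Icc 1 d) A (Icc 1 d) E P σ ↔
      Set.BijOn σ (Set.Icc 1 d) (Set.Icc 1 d) ∧
      (∀ ℓ ∈ Set.Icc 1 d, IsNEPathFrom (P ℓ) (A ℓ) (E (σ ℓ))) ∧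
      ∀ k ∈ Set.Icc 1 d, ∀ l ∈ Set.Icc 1 d, k ≠ l → ∀ p ∈ P k, p ∉ P l := by
  have hdisj : ((Icc 1 d : Finset ℕ) : Set ℕ).Pairwise (fun k l => (P k).Disjoint (P l)) ↔
      ∀ k ∈ Set.Icc 1 d, ∀ l ∈ Set.Icc 1 d, k ≠ l → ∀ p ∈ P k, p ∉ P l := by
    rw [coe_Icc]
    rfl
  rw [← hdisj, ← coe_Icc]
  exact ⟨fun h => ⟨h.bijOn, h.isPath, h.disjoint⟩, fun h => ⟨h.1, h.2.1, h.2.2⟩⟩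

theorem bijOn_sub_Icc_Ioc : Set.BijOn (fun ℓ : ℕ => (d : ℤ) + 1 - ℓ) (Icc 1 d : Finset ℕ)
    (Ioc (0 : ℤ) d : Finset ℤ) := by
  refine ⟨fun ℓ hℓ => ?_, fun k _ l _ hkl => ?_, fun x hx => ?_⟩
  · have := mem_Icc.1 (mem_coe.1 hℓ)
    beta_reduce
    exact mem_coe.2 (mem_Ioc.2 ⟨by omega, by omega⟩)
  · exact Nat.cast_injective (sub_right_injective hkl)
  · have := mem_Ioc.1 (mem_coe.1 hx)
    refine ⟨(d + 1 - x).toNat, mem_coe.2 (mem_Icc.2 ⟨by omega, by omega⟩), ?_⟩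
    beta_reduce
    omega

end LatticePoints

end

theorem maximal_S1_iff_path_family_general (n d : ℕ) (hdn : d ≤ n) (τ i : ℕ → ℕ)
    (hbij : Set.BijOn τ (Set.Icc 1 n) (Set.Icc 1 n))
    (hmono1 : StrictMonoOn τ (Set.Icc 1 d))
    (hmono2 : StrictMonoOn τ (Set.Icc (d + 1) n))
    (hi : StrictMonoOn i (Set.Icc 1 d))
    (hiN : ∀ ℓ ∈ Set.Icc 1 d, i ℓ ≤ n)
    (κ : ℕ → ℕ)
    (hκ : ∀ q, κ q = ((Finset.Icc 1 d).filter (fun ℓ => i q < τ ℓ)).card)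
    (A E : ℕ → ℤ × ℤ)
    (hA : ∀ ℓ, A ℓ = ((d : ℤ) + 1 - ℓ, (d : ℤ)))
    (hE : ∀ q, E q = ((d : ℤ) - κ q, (κ q : ℤ) + i q))
    (S : Finset (ℕ × ℕ))
    (hSrefl : ∀ s ∈ S, 1 ≤ s.1 ∧ s.1 ≤ d ∧ d + 1 ≤ s.2 ∧ s.2 ≤ n) :
    (S1Prop d τ i S.val ∧
      ∀ s : ℕ × ℕ, s ∉ S → (1 ≤ s.1 ∧ s.1 ≤ d ∧ d + 1 ≤ s.2 ∧ s.2 ≤ n) →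
        ¬ S1Prop d τ i (insert s S).val)
    ↔ ∃ (P : ℕ → List (ℤ × ℤ)) (σ : ℕ → ℕ),
        Set.BijOn σ (Set.Icc 1 d) (Set.Icc 1 d) ∧
        (∀ ℓ ∈ Set.Icc 1 d, IsNEPathFrom (P ℓ) (A ℓ) (E (σ ℓ))) ∧
        (∀ k ∈ Set.Icc 1 d, ∀ l ∈ Set.Icc 1 d, k ≠ l → ∀ p ∈ P k, p ∉ P l) ∧
        ∀ p : ℤ × ℤ,
          ((d : ℤ) < p.2 ∧ ∃ ℓ ∈ Set.Icc 1 d, p ∈ P ℓ) ↔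
          ∃ s ∈ S, p = ((s.1 : ℤ), (s.2 : ℤ)) := by
  let R := Finset.Icc 1 d ×ˢ Finset.Icc (d + 1) n
  have hmemR : ∀ s, s ∈ R ↔ 1 ≤ s.1 ∧ s.1 ≤ d ∧ d + 1 ≤ s.2 ∧ s.2 ≤ n := fun s => by
    simp only [R, Finset.mem_product, Finset.mem_Icc, and_assoc]
  have hSR : S ⊆ R := fun s hs => (hmemR s).2 (hSrefl s hs)
  have hEcut : ∀ q ∈ Finset.Icc 1 d, E q = latticePoint (cutPoint n d τ (i q)) := fun q hq => by
    rw [hE, hκ, eq_latticePoint_cutPoint hbij hdn (hiN q (Finset.mem_Icc.1 hq))]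
  have hEsys : EndSystem 0 d d (Finset.Icc 1 d) E := endSystem_of_cutPoint hbij hdn hi hiN hEcut
  have hEn : ∀ q ∈ Finset.Icc 1 d, (E q).2 ≤ n := fun q hq => by
    rw [hEcut q hq]
    exact Nat.cast_le.2 (cutPoint_snd_le hdn)
  have hS1 : ∀ S ⊆ R, S1Prop d τ i S.val ↔ ChainBound 0 (Finset.Icc 1 d) E (S.map latticePoint) :=
    fun S hS => (s1Prop_iff hbij.injOn hmono1.monotoneOn hmono2.monotoneOn hdn hS).trans
      (chainBound_map_latticePoint hEcut).symm
  simp only [← hmemR]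
  rw [← maximal_s1Prop_iff hSR, ← maximal_map_latticePoint_iff hS1, map_latticePoint_product_Icc,
    hEsys.maximal_chainBound_iff hEn,
    exists_isPathFamily_congr bijOn_sub_Icc_Ioc fun ℓ _ => (hA ℓ).symm]
  simp only [isPathFamily_Icc_iff, pointsAbove_eq_map_latticePoint_iff, and_assoc, Finset.mem_Icc,
    Set.mem_Icc]

/-- A set `S` of reflections `(x,y)`, `1 ≤ x ≤ d < y ≤ n`, satisfies (S1) and is
maximal with respect to (S1) if and only if `S` is exactly the set of lattice points
with y-coordinate `> d` on the paths of some family of non-intersecting NE lattice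
paths `P_ℓ` from `A_ℓ = (d+1-ℓ,d)` to `E_{σ(ℓ)} = (d-κ_{σ(ℓ)}, κ_{σ(ℓ)}+i_{σ(ℓ)})`. -/
theorem maximal_S1_iff_path_family (n d : ℕ) (hd : 1 ≤ d) (hdn : d ≤ n)
    (τ i : ℕ → ℕ)
    (hbij : Set.BijOn τ (Set.Icc 1 n) (Set.Icc 1 n))
    (hmono1 : StrictMonoOn τ (Set.Icc 1 d))
    (hmono2 : StrictMonoOn τ (Set.Icc (d + 1) n))
    (hi : StrictMonoOn i (Set.Icc 1 d))
    (hiN : ∀ ℓ ∈ Set.Icc 1 d, i ℓ ∈ Set.Icc 1 n)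
    (hle : ∀ ℓ ∈ Set.Icc 1 d, τ ℓ ≤ i ℓ)
    (κ : ℕ → ℕ)
    (hκ : ∀ q, κ q = ((Finset.Icc 1 d).filter (fun ℓ => i q < τ ℓ)).card)
    (A E : ℕ → ℤ × ℤ)
    (hA : ∀ ℓ, A ℓ = ((d : ℤ) + 1 - ℓ, (d : ℤ)))
    (hE : ∀ q, E q = ((d : ℤ) - κ q, (κ q : ℤ) + i q))
    (S : Finset (ℕ × ℕ))
    (hSrefl : ∀ s ∈ S, 1 ≤ s.1 ∧ s.1 ≤ d ∧ d + 1 ≤ s.2 ∧ s.2 ≤ n) :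
    (S1Prop d τ i S.val ∧
      ∀ s : ℕ × ℕ, s ∉ S → (1 ≤ s.1 ∧ s.1 ≤ d ∧ d + 1 ≤ s.2 ∧ s.2 ≤ n) →
        ¬ S1Prop d τ i (insert s S).val)
    ↔ ∃ (P : ℕ → List (ℤ × ℤ)) (σ : ℕ → ℕ),
        Set.BijOn σ (Set.Icc 1 d) (Set.Icc 1 d) ∧
        (∀ ℓ ∈ Set.Icc 1 d, IsNEPathFrom (P ℓ) (A ℓ) (E (σ ℓ))) ∧
        (∀ k ∈ Set.Icc 1 d, ∀ l ∈ Set.Icc 1 d, k ≠ l → ∀ p ∈ P k, p ∉ P l) ∧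
        ∀ p : ℤ × ℤ,
          ((d : ℤ) < p.2 ∧ ∃ ℓ ∈ Set.Icc 1 d, p ∈ P ℓ) ↔
          ∃ s ∈ S, p = ((s.1 : ℤ), (s.2 : ℤ)) :=
  maximal_S1_iff_path_family_general n d hdn τ i hbij hmono1 hmono2 hi (fun ℓ hℓ => (hiN ℓ hℓ).2)
    κ hκ A E hA hE S hSrefl
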